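/- The striction line of the C-ruled surface coincides with the base curve, i.e. α*(s) = α(s) for all s ∈ ℝ, if and only if g(s)·τ(s) = 0 for all s; in particular, if α is a general helix (g ≡ 0) or a planar curve (τ ≡ 0), then α* = α. -/

import Mathlib

open RealInnerProductSpace

/-- Cross product on `EuclideanSpace ℝ (Fin 3)`. -/
noncomputable def cross3 (u v : EuclideanSpace ℝ (Fin 3)) : EuclideanSpace ℝ (Fin 3) :=
  (EuclideanSpace.equiv (Fin 3) ℝ).symm
    (crossProduct ((EuclideanSpace.equiv (Fin 3) ℝ) u) ((EuclideanSpace.equiv (Fin 3) ℝ) v))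

/-- Determinant of the 3×3 matrix whose rows are the given vectors. -/
noncomputable def det3 (u v w : EuclideanSpace ℝ (Fin 3)) : ℝ :=
  Matrix.det (Matrix.of ![(EuclideanSpace.equiv (Fin 3) ℝ) u,
    (EuclideanSpace.equiv (Fin 3) ℝ) v, (EuclideanSpace.equiv (Fin 3) ℝ) w])

theorem inner_left_cross3 (u v : EuclideanSpace ℝ (Fin 3)) : ⟪u, cross3 u v⟫ = 0 := by
  simp [cross3, PiLp.inner_apply, Fin.sum_univ_three, cross_apply]
  ring

theorem inner_right_cross3 (u v : EuclideanSpace ℝ (Fin 3)) : ⟪v, cross3 u v⟫ = 0 := by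
  simp [cross3, PiLp.inner_apply, Fin.sum_univ_three, cross_apply]
  ring

theorem ContDiff.cross3 {n : WithTop ℕ∞} {u v : ℝ → EuclideanSpace ℝ (Fin 3)}
    (hu : ContDiff ℝ n u) (hv : ContDiff ℝ n v) :
    ContDiff ℝ n fun s => _root_.cross3 (u s) (v s) := by
  rw [contDiff_euclidean] at hu hv ⊢
  intro i
  fin_cases i <;> simp [_root_.cross3, cross_apply] <;>
    exact ((hu _).mul (hv _)).sub ((hu _).mul (hv _))

theorem inner_deriv_eq_zero_of_norm_eq_one {u : ℝ → EuclideanSpace ℝ (Fin 3)}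
    (hu : Differentiable ℝ u) (h : ∀ s, ‖u s‖ = 1) (s : ℝ) : ⟪u s, deriv u s⟫ = 0 := by
  have hd := ((hu s).hasDerivAt.inner ℝ (hu s).hasDerivAt).deriv
  have hc : (fun t => ⟪u t, u t⟫) = fun _ => (1 : ℝ) := by
    funext t
    simp [h t]
  rw [hc, deriv_const, real_inner_comm (u s) (deriv u s)] at hd
  linarith

theorem deriv_div_sqrt_sq_add_sq {κ τ : ℝ → ℝ} {s : ℝ} (hκ : DifferentiableAt ℝ κ s)
    (hτ : DifferentiableAt ℝ τ s) (hpos : 0 < κ s) :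
    deriv (fun u => κ u / √(κ u ^ 2 + τ u ^ 2)) s =
      -(κ s ^ 2 / (κ s ^ 2 + τ s ^ 2) * deriv (fun u => τ u / κ u) s * τ s
        / √(κ s ^ 2 + τ s ^ 2)) := by
  have hq : 0 < κ s ^ 2 + τ s ^ 2 := by positivity
  have hr : 0 < √(κ s ^ 2 + τ s ^ 2) := Real.sqrt_pos.2 hq
  have h1 := (((hκ.hasDerivAt.pow 2).add (hτ.hasDerivAt.pow 2)).sqrt hq.ne')
  have h2 := (hκ.hasDerivAt.div h1 hr.ne').deriv
  have h3 := (hτ.hasDerivAt.div hκ.hasDerivAt hpos.ne').deriv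
  simp only [Pi.div_def, Pi.add_def, Pi.pow_def] at h2 h3
  rw [h2, h3]
  have hsq : √(κ s ^ 2 + τ s ^ 2) ^ 2 = κ s ^ 2 + τ s ^ 2 := Real.sq_sqrt hq.le
  generalize √(κ s ^ 2 + τ s ^ 2) = r at *
  rw [← hsq]
  field_simp
  simp
  rw [hsq]
  ring

theorem stmt_7
    (α : ℝ → EuclideanSpace ℝ (Fin 3))
    (hα : ContDiff ℝ (⊤ : ℕ∞) α)
    (hunit : ∀ s, ‖deriv α s‖ = 1)
    (T : ℝ → EuclideanSpace ℝ (Fin 3)) (hT : ∀ s, T s = deriv α s)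
    (κ : ℝ → ℝ) (hκ : ∀ s, κ s = ‖deriv (deriv α) s‖) (hκpos : ∀ s, 0 < κ s)
    (N : ℝ → EuclideanSpace ℝ (Fin 3)) (hN : ∀ s, N s = (κ s)⁻¹ • deriv (deriv α) s)
    (B : ℝ → EuclideanSpace ℝ (Fin 3)) (hB : ∀ s, B s = cross3 (T s) (N s))
    (τ : ℝ → ℝ) (hτ : ∀ s, τ s = ⟪deriv N s, B s⟫)
    (f : ℝ → ℝ) (hf : ∀ s, f s = Real.sqrt (κ s ^ 2 + τ s ^ 2))
    (g : ℝ → ℝ) (hg : ∀ s, g s = κ s ^ 2 / (κ s ^ 2 + τ s ^ 2) * deriv (fun u => τ u / κ u) s)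
    (C : ℝ → EuclideanSpace ℝ (Fin 3))
    (hC : ∀ s, C s = (Real.sqrt (κ s ^ 2 + τ s ^ 2))⁻¹ • ((-κ s) • T s + τ s • B s))
    (W : ℝ → EuclideanSpace ℝ (Fin 3))
    (hW : ∀ s, W s = (Real.sqrt (κ s ^ 2 + τ s ^ 2))⁻¹ • (τ s • T s + κ s • B s)) :
    ((∀ s : ℝ, α s - (⟪T s, deriv C s⟫ / ‖deriv C s‖ ^ 2) • C s = α s) ↔
      (∀ s : ℝ, g s * τ s = 0)) ∧
    (((∀ s : ℝ, g s = 0) ∨ (∀ s : ℝ, τ s = 0)) →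
      ∀ s : ℝ, α s - (⟪T s, deriv C s⟫ / ‖deriv C s‖ ^ 2) • C s = α s) := by
  obtain rfl : T = deriv α := funext hT
  have smooth_deriv : ∀ {u : ℝ → EuclideanSpace ℝ (Fin 3)},
      ContDiff ℝ (⊤ : ℕ∞) u → ContDiff ℝ (⊤ : ℕ∞) (deriv u) :=
    fun hu => (contDiff_infty_iff_deriv.1 hu).2
  have hT' := smooth_deriv hα
  have hT'' := smooth_deriv hT'
  have hne : ∀ s, deriv (deriv α) s ≠ 0 := fun s => norm_pos_iff.1 (hκ s ▸ hκpos s)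
  have hκs : ContDiff ℝ (⊤ : ℕ∞) κ := by
    rw [funext hκ]
    exact hT''.norm ℝ hne
  have hNs : ContDiff ℝ (⊤ : ℕ∞) N := by
    rw [funext hN]
    exact (hκs.inv fun s => (hκpos s).ne').smul hT''
  have hBs : ContDiff ℝ (⊤ : ℕ∞) B := by
    rw [funext hB]
    exact hT'.cross3 hNs
  have hτs : ContDiff ℝ (⊤ : ℕ∞) τ := by
    rw [funext hτ]
    exact (smooth_deriv hNs).inner ℝ hBs
  have hq : ∀ s, 0 < κ s ^ 2 + τ s ^ 2 := fun s => by
    have := hκpos s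
    positivity
  have hr : ∀ s, 0 < √(κ s ^ 2 + τ s ^ 2) := fun s => Real.sqrt_pos.2 (hq s)
  have hCs : ContDiff ℝ (⊤ : ℕ∞) C := by
    rw [funext hC]
    exact ((((hκs.pow 2).add (hτs.pow 2)).sqrt fun s => (hq s).ne').inv fun s => (hr s).ne').smul
      ((hκs.neg.smul hT').add (hτs.smul hBs))
  have hTB : ∀ s, ⟪deriv α s, B s⟫ = 0 := fun s => by rw [hB]; exact inner_left_cross3 _ _
  have hT'B : ∀ s, ⟪deriv (deriv α) s, B s⟫ = 0 := fun s => by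
    have h : deriv (deriv α) s = κ s • N s := by rw [hN, smul_inv_smul₀ (hκpos s).ne']
    rw [h, real_inner_smul_left, hB, inner_right_cross3, mul_zero]
  have hTd : Differentiable ℝ (deriv α) := hT'.differentiable (by simp)
  have hTT' := inner_deriv_eq_zero_of_norm_eq_one hTd hunit
  have hTC : ∀ s, ⟪deriv α s, C s⟫ = -(κ s / √(κ s ^ 2 + τ s ^ 2)) := fun s => by
    rw [hC, real_inner_smul_right, inner_add_right, real_inner_smul_right, real_inner_smul_right,
      hTB, real_inner_self_eq_norm_sq, hunit]
    ring
  have hT'C : ∀ s, ⟪deriv (deriv α) s, C s⟫ = 0 := fun s => by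
    rw [hC, real_inner_smul_right, inner_add_right, real_inner_smul_right, real_inner_smul_right,
      hT'B, real_inner_comm, hTT']
    ring
  have hTC' : ∀ s, ⟪deriv α s, deriv C s⟫ = g s * τ s / √(κ s ^ 2 + τ s ^ 2) := fun s => by
    have h := ((hTd s).hasDerivAt.inner ℝ
      (hCs.differentiable (by simp) s).hasDerivAt).deriv
    rw [funext hTC, deriv.fun_neg, hT'C, deriv_div_sqrt_sq_add_sq
      (hκs.differentiable (by simp) s) (hτs.differentiable (by simp) s) (hκpos s), ← hg] at h
    linarith
  have hC0 : ∀ s, C s ≠ 0 := fun s h0 => by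
    have h := hTC s
    rw [h0, inner_zero_right] at h
    have := div_pos (hκpos s) (hr s)
    linarith
  have key : ∀ s, α s - (⟪deriv α s, deriv C s⟫ / ‖deriv C s‖ ^ 2) • C s = α s ↔
      g s * τ s = 0 := fun s => by
    have hinner : ⟪deriv α s, deriv C s⟫ = 0 ↔ g s * τ s = 0 := by
      rw [hTC', div_eq_zero_iff, or_iff_left (hr s).ne']
    rw [sub_eq_self, smul_eq_zero, or_iff_left (hC0 s), ← hinner, div_eq_zero_iff,
      or_iff_left_of_imp]
    intro h
    rw [norm_eq_zero.1 (pow_eq_zero_iff two_ne_zero |>.1 h), inner_zero_right]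
  refine ⟨forall_congr' key, ?_⟩
  rintro (h | h) s <;> simp [key, h]
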